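/- Let x₁,…,x_d > 0 and α₁,…,α_d > 0 satisfy xᵢ = αᵢ ∏_{k≠i} x_k for all i ∈ [d], with d ≥ 3. Then for each j, x_j = (α_j^{d−3} / ∏_{k≠j} α_k)^{1/(2d−4)}. -/

import Mathlib

open scoped BigOperators

/-!
Put `P = ∏ k, x k` and `A = ∏ k, α k`. Multiplying the `i`-th equation by `x i` gives
`x i ^ 2 = α i * P`, and the product of these over `i` is `P ^ 2 = A * P ^ d`, so that
`A * P ^ (d - 2) = 1`. Hence `x j ^ (2 * d - 4) = α j ^ (d - 2) * P ^ (d - 2) = α j ^ (d - 2) / A`,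
and one factor `α j` cancels against `A = α j * ∏ k ≠ j, α k`. Positivity allows taking the root.
-/

/-- Solution of the coupled alignment equations: if `xᵢ = αᵢ ∏_{k≠i} x_k`
with all `xᵢ, αᵢ > 0` and `d ≥ 3`, then
`x_j = (α_j^{d-3} / ∏_{k≠j} α_k)^{1/(2d-4)}`. -/
theorem alignment_system_solution
    {d : ℕ} (hd : 3 ≤ d)
    (x α : Fin d → ℝ) (hx : ∀ i, 0 < x i) (hα : ∀ i, 0 < α i)
    (h : ∀ i, x i = α i * ∏ k ∈ Finset.univ.erase i, x k) :
    ∀ j, x j = ((α j ^ (d - 3)) / ∏ k ∈ Finset.univ.erase j, α k)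
        ^ ((1 : ℝ) / (2 * d - 4)) := by
  intro j
  obtain ⟨n, rfl⟩ : ∃ n, d = n + 3 := ⟨d - 3, by omega⟩
  have hP : 0 < ∏ k, x k := Finset.prod_pos fun k _ => hx k
  have hB : 0 < ∏ k ∈ Finset.univ.erase j, α k := Finset.prod_pos fun k _ => hα k
  have hsq : ∀ i, x i ^ 2 = α i * ∏ k, x k := by
    intro i
    rw [← Finset.mul_prod_erase Finset.univ x (Finset.mem_univ i)]
    linear_combination x i * h i
  have hprod : (∏ k, x k) ^ 2 = (∏ k, α k) * (∏ k, x k) ^ (n + 3) := by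
    rw [← Finset.prod_pow, Finset.prod_congr rfl fun i _ => hsq i, Finset.prod_mul_distrib]
    simp
  have hA : (∏ k, α k) * (∏ k, x k) ^ (n + 1) = 1 := by
    apply mul_left_cancel₀ (pow_ne_zero 2 hP.ne')
    linear_combination -hprod
  rw [← Finset.mul_prod_erase Finset.univ α (Finset.mem_univ j)] at hA
  have hpow : x j ^ (2 * (n + 1)) = α j ^ n / ∏ k ∈ Finset.univ.erase j, α k := by
    rw [pow_mul, hsq j, mul_pow, eq_div_iff hB.ne']
    linear_combination α j ^ n * hA
  have hexp : (1 : ℝ) / (2 * ((n + 3 : ℕ) : ℝ) - 4) = ((2 * (n + 1) : ℕ) : ℝ)⁻¹ := by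
    rw [one_div]
    congr 1
    push_cast
    ring
  rw [Nat.add_sub_cancel, ← hpow, hexp, Real.pow_rpow_inv_natCast (hx j).le (by omega)]
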